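/- Suppose X is a trivial strongly minimal set in a saturated model of a complete stable first-order theory. Given a tuple a = (a_1, …, a_n) ∈ X^n, the partial n-type Σ(x_1, …, x_n) := ⋃_{i,j ≤ n} tp(a_i, a_j) has only finitely many completions: there exist finitely many complete n-types q_1(x), …, q_N(x) such that every b ∈ X^n realizing Σ realizes q_ℓ for some ℓ ≤ N. -/

import Mathlib

/-!
Statement 2 (Lemma on trivial strongly minimal sets).

We work in Mathlib's first-order framework.  The ambient saturated model is an
`L`-structure `M` (a model of its own complete theory `Th(M)`; completeness is
automatic).  Saturation is expressed as: every finitely satisfiable set of formulas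
in one free variable over a parameter set of cardinality `< |M|` is realized in `M`.
Stability of the (complete) theory of `M` is expressed as the failure of the order
property.  The strongly minimal set `X` is given by a formula `χ` in one free
variable; strong minimality says `X` is infinite and every subset of `X` definable
with parameters is finite or cofinite in `X`.  `acl` is the usual model-theoretic
algebraic closure, and triviality says `a ∈ acl(A)` implies `a ∈ acl(b)` for some
single `b ∈ A`, for `a` in `X` and `A ⊆ X`.

Since `M` is saturated, complete `n`-types over `∅` (consistent with `Th(M)`) are
exactly the types `tp(c)` of tuples `c ∈ M^n`, so the finitely many completions
`q₁, …, q_N` of the partial type `Σ = ⋃_{i,j} tp(aᵢ, aⱼ)` are represented by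
realizing tuples; `b ⊨ Σ` means every formula true of `(aᵢ, aⱼ)` is true of
`(bᵢ, bⱼ)`, and `b ⊨ qₗ` means `b` has the same complete type as the tuple
representing `qₗ`.
-/

open FirstOrder

/-- `a` belongs to the model-theoretic algebraic closure of the set `A ⊆ M`:
some formula with parameters from `A`, having only finitely many solutions,
is satisfied by `a`. -/
def InAcl (L : FirstOrder.Language) (M : Type) [L.Structure M] (A : Set M) (a : M) : Prop :=
  ∃ (k : ℕ) (φ : L.Formula (Fin k ⊕ Fin 1)) (p : Fin k → M),
    (∀ i, p i ∈ A) ∧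
    {x : M | φ.Realize (Sum.elim p (fun _ => x))}.Finite ∧
    φ.Realize (Sum.elim p (fun _ => a))

/-- The definable set given by `χ` is strongly minimal: it is infinite and every
subset of it definable with parameters is finite or cofinite. -/
def StronglyMinimalFormula (L : FirstOrder.Language) (M : Type) [L.Structure M]
    (χ : L.Formula (Fin 1)) : Prop :=
  {m : M | χ.Realize (fun _ => m)}.Infinite ∧
  ∀ (k : ℕ) (φ : L.Formula (Fin k ⊕ Fin 1)) (p : Fin k → M),
    {x : M | χ.Realize (fun _ => x) ∧ φ.Realize (Sum.elim p (fun _ => x))}.Finite ∨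
    {x : M | χ.Realize (fun _ => x) ∧ ¬ φ.Realize (Sum.elim p (fun _ => x))}.Finite

/-- Triviality of the strongly minimal set given by `χ`: for `a` in `X` and `A ⊆ X`,
`a ∈ acl(A)` implies `a ∈ acl(b)` for some single element `b ∈ A`. -/
def TrivialFormula (L : FirstOrder.Language) (M : Type) [L.Structure M]
    (χ : L.Formula (Fin 1)) : Prop :=
  ∀ a : M, χ.Realize (fun _ => a) →
    ∀ A : Set M, A ⊆ {m : M | χ.Realize (fun _ => m)} →
      InAcl L M A a → ∃ b ∈ A, InAcl L M ({b} : Set M) a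

/-- `M` is a saturated model: every finitely satisfiable collection of formulas in one
free variable, with parameters indexed by a set of cardinality `< |M|`, is realized. -/
def SaturatedModel (L : FirstOrder.Language) (M : Type) [L.Structure M] : Prop :=
  ∀ (α : Type) (p : α → M), Cardinal.mk α < Cardinal.mk M →
    ∀ Φ : Set (L.Formula (α ⊕ Fin 1)),
      (∀ Φ₀ : Finset (L.Formula (α ⊕ Fin 1)), ↑Φ₀ ⊆ Φ →
        ∃ x : M, ∀ φ ∈ Φ₀, φ.Realize (Sum.elim p (fun _ => x))) →
      ∃ x : M, ∀ φ ∈ Φ, φ.Realize (Sum.elim p (fun _ => x))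

/-- The (complete) theory of `M` has the order property. -/
def HasOrderProperty (L : FirstOrder.Language) (M : Type) [L.Structure M] : Prop :=
  ∃ (k m : ℕ) (φ : L.Formula (Fin k ⊕ Fin m)) (a : ℕ → Fin k → M) (b : ℕ → Fin m → M),
    ∀ i j : ℕ, φ.Realize (Sum.elim (a i) (b j)) ↔ i ≤ j

/-- The complete theory of `M` is stable: it does not have the order property. -/
def StableModel (L : FirstOrder.Language) (M : Type) [L.Structure M] : Prop :=
  ¬ HasOrderProperty L M

/-!
Pass from the first coordinates of a tuple to one more coordinate. By triviality, whether the last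
coordinate is algebraic over the others is decided by the types of pairs, hence by `Σ`. If it is,
then `Σ` contains a formula `θ(x i, y)` with finitely many solutions `y`, so each type of the first
coordinates has finitely many extensions. If it is not, then by strong minimality the last
coordinate is generic over the others, and each type of the first coordinates has one extension.
-/

open FirstOrder.Language

theorem finite_image_of_finite_fibers {α β γ : Type*} {f : α → β} {g : α → γ} {s : Set α}
    (hf : (f '' s).Finite) (hg : ∀ a ∈ s, (g '' {x ∈ s | f x = f a}).Finite) :
    (g '' s).Finite := by
  refine (hf.biUnion (t := fun b => g '' {x ∈ s | f x = b}) ?_).subset ?_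
  · rintro _ ⟨a, ha, rfl⟩
    exact hg a ha
  · rintro _ ⟨a, ha, rfl⟩
    exact Set.mem_biUnion (Set.mem_image_of_mem f ha) ⟨a, ⟨ha, rfl⟩, rfl⟩

theorem sumElim_comp_inl_const {α M : Type*} (b : α ⊕ Fin 1 → M) :
    (Sum.elim (b ∘ Sum.inl) fun _ => b (Sum.inr 0)) = b := by
  ext (i | i)
  · rfl
  · exact congrArg (b ∘ Sum.inr) (Subsingleton.elim 0 i)

section Types

variable {L : FirstOrder.Language} {M : Type*} [L.Structure M] {α β ι : Type*}

section CompleteTypes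

variable [Nonempty M] {v w : α → M}

variable (L) in
/-- The complete type `tp(v)` of a tuple over `∅`, as a type of the complete theory of `M`. -/
def tp (v : α → M) : (L.completeTheory M).CompleteType α :=
  (L.completeTheory M).typeOf v

theorem tp_eq_iff : tp L v = tp L w ↔ ∀ φ : L.Formula α, φ.Realize v ↔ φ.Realize w := by
  refine ⟨fun h φ => ?_, fun h => SetLike.ext fun φ => ?_⟩
  · rw [← Theory.CompleteType.formula_mem_typeOf (T := L.completeTheory M),
      ← Theory.CompleteType.formula_mem_typeOf (T := L.completeTheory M)]
    exact SetLike.ext_iff.1 h _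
  · simpa only [tp, Theory.CompleteType.mem_typeOf] using h (Formula.equivSentence.symm φ)

theorem tp_eq_iff_imp : tp L v = tp L w ↔ ∀ φ : L.Formula α, φ.Realize v → φ.Realize w := by
  refine tp_eq_iff.trans ⟨fun h φ => (h φ).1, fun h φ => ⟨h φ, ?_⟩⟩
  simpa only [Formula.realize_not, not_imp_not] using h (∼φ)

theorem tp_comp_eq_of_tp_eq (h : tp L v = tp L w) (f : β → α) : tp L (v ∘ f) = tp L (w ∘ f) :=
  tp_eq_iff.2 fun φ => by
    simpa only [Formula.realize_relabel] using tp_eq_iff.1 h (φ.relabel f)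

theorem tp_comp_equiv_eq_iff (e : β ≃ α) : tp L (v ∘ e) = tp L (w ∘ e) ↔ tp L v = tp L w := by
  refine ⟨fun h => ?_, fun h => tp_comp_eq_of_tp_eq h e⟩
  simpa only [Function.comp_assoc, Equiv.self_comp_symm, Function.comp_id] using
    tp_comp_eq_of_tp_eq h e.symm

end CompleteTypes

section SolutionSets

/-- The set `φ(v, M)` defined by the formula `φ(x, y)` in the single variable `y`, with the
parameters `v` in place of `x`. -/
def solutionSet (φ : L.Formula (α ⊕ Fin 1)) (v : α → M) : Set M :=
  {y | φ.Realize (Sum.elim v fun _ => y)}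

theorem mem_solutionSet {φ : L.Formula (α ⊕ Fin 1)} {v : α → M} {y : M} :
    y ∈ solutionSet φ v ↔ φ.Realize (Sum.elim v fun _ => y) :=
  Iff.rfl

theorem solutionSet_relabel (φ : L.Formula (β ⊕ Fin 1)) (f : β → α) (v : α → M) :
    solutionSet (φ.relabel (Sum.map f id)) v = solutionSet φ (v ∘ f) := by
  ext y
  simp only [mem_solutionSet, Formula.realize_relabel, Sum.elim_comp_map, Function.comp_id]

theorem exists_realize_iff_solutionSet_subset_range (φ : L.Formula (α ⊕ Fin 1)) (β : Type*)
    [Finite β] : ∃ σ : L.Formula α, ∀ v : α → M,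
      σ.Realize v ↔ ∃ x : β → M, solutionSet φ v ⊆ Set.range x := by
  let cover : L.Formula ((α ⊕ β) ⊕ Fin 1) :=
    (φ.relabel (Sum.map Sum.inl id)).imp
      (Formula.iSup fun i => (Term.var (Sum.inl (Sum.inr i))).equal (Term.var (Sum.inr 0)))
  have realize_cover (v : α → M) (x : β → M) (y : M) :
      cover.Realize (Sum.elim (Sum.elim v x) fun _ => y) ↔
        (y ∈ solutionSet φ v → y ∈ Set.range x) := by
    simp only [cover, Formula.realize_imp, Formula.realize_relabel, Sum.elim_comp_map,
      Sum.elim_comp_inl, Function.comp_id, Formula.realize_iSup, Formula.realize_equal,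
      Term.realize_var, Sum.elim_inl, Sum.elim_inr, mem_solutionSet, Set.mem_range]
  refine ⟨(cover.iAlls (Fin 1)).iExs β, fun v => ?_⟩
  simp only [Formula.realize_iExs, Formula.realize_iAlls]
  refine exists_congr fun x => ⟨fun h y => (realize_cover v x y).1 (h fun _ => y), fun h y => ?_⟩
  rw [eq_const_of_unique y]
  exact (realize_cover v x (y 0)).2 (@h (y 0))

variable [Nonempty M] {v w : α → M} {φ : L.Formula (α ⊕ Fin 1)}

theorem finite_solutionSet_of_tp_eq (h : tp L v = tp L w) (hfin : (solutionSet φ v).Finite) :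
    (solutionSet φ w).Finite := by
  have := hfin.to_subtype
  obtain ⟨σ, hσ⟩ := exists_realize_iff_solutionSet_subset_range (M := M) φ (solutionSet φ v)
  have hv : σ.Realize v := (hσ v).2 ⟨Subtype.val, Subtype.range_val.ge⟩
  obtain ⟨x, hx⟩ := (hσ w).1 ((tp_eq_iff.1 h σ).1 hv)
  exact (Set.finite_range x).subset hx

theorem exists_mem_solutionSet_tp_eq (h : tp L v = tp L w) (hfin : (solutionSet φ v).Finite)
    {d : M} (hd : d ∈ solutionSet φ w) :
    ∃ c ∈ solutionSet φ v, tp L (Sum.elim v fun _ : Fin 1 => c) = tp L (Sum.elim w fun _ => d) := by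
  -- Otherwise each of the finitely many `c ∈ φ(v, M)` is separated from `d` by some formula, while
  -- `tp(w) = tp(v)` says that some solution of `φ` satisfies all of these formulas.
  by_contra! hne
  have := hfin.to_subtype
  have hsep (c : solutionSet φ v) : ∃ ψ : L.Formula (α ⊕ Fin 1),
      ψ.Realize (Sum.elim w fun _ => d) ∧ ¬ψ.Realize (Sum.elim v fun _ => c.1) := by
    simpa only [ne_comm, ne_eq, tp_eq_iff_imp, not_forall, exists_prop] using hne c c.2
  choose ψ hψw hψv using hsep
  let ρ : L.Formula α := (φ ⊓ Formula.iInf ψ).iExs (Fin 1)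
  have hρw : ρ.Realize w := Formula.realize_iExs.2
    ⟨fun _ => d, Formula.realize_inf.2 ⟨hd, Formula.realize_iInf.2 hψw⟩⟩
  obtain ⟨y, hy⟩ := Formula.realize_iExs.1 ((tp_eq_iff.1 h ρ).2 hρw)
  rw [eq_const_of_unique y, Formula.realize_inf, Formula.realize_iInf] at hy
  exact hψv ⟨y 0, hy.1⟩ (hy.2 ⟨y 0, hy.1⟩)

theorem finite_tp_image_of_finite_solutionSet (hfin : (solutionSet φ v).Finite) :
    (tp L '' {b : α ⊕ Fin 1 → M | tp L (b ∘ Sum.inl) = tp L v ∧ φ.Realize b}).Finite := by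
  refine (hfin.image fun c => tp L (Sum.elim v fun _ => c)).subset ?_
  rintro _ ⟨b, ⟨hbv, hφ⟩, rfl⟩
  rw [← sumElim_comp_inl_const b] at hφ
  obtain ⟨c, hc, hcb⟩ := exists_mem_solutionSet_tp_eq hbv.symm hfin hφ
  exact ⟨c, hc, hcb.trans (congrArg (tp L) (sumElim_comp_inl_const b))⟩

end SolutionSets

section PairTypes

variable [Nonempty M] {a b : ι → M}

variable (L) in
/-- The set of realizations in `M` of the partial type `⋃ i j, tp(a i, a j)`. -/
def pairTypeRealizations (a : ι → M) : Set (ι → M) :=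
  {b | ∀ i j, tp L ![b i, b j] = tp L ![a i, a j]}

theorem mem_pairTypeRealizations_iff_imp : b ∈ pairTypeRealizations L a ↔
    ∀ (i j : ι) (φ : L.Formula (Fin 2)), φ.Realize ![a i, a j] → φ.Realize ![b i, b j] :=
  forall₂_congr fun _ _ => eq_comm.trans tp_eq_iff_imp

theorem pairTypeRealizations_eq_of_mem (hb : b ∈ pairTypeRealizations L a) :
    pairTypeRealizations L b = pairTypeRealizations L a :=
  Set.ext fun _ => forall₂_congr fun i j => by rw [hb i j]

theorem comp_mem_pairTypeRealizations (hb : b ∈ pairTypeRealizations L a) (f : β → ι) :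
    b ∘ f ∈ pairTypeRealizations L (a ∘ f) :=
  fun i j => hb (f i) (f j)

theorem tp_single_eq_of_mem_pairTypeRealizations (hb : b ∈ pairTypeRealizations L a) (i : ι) :
    tp L (fun _ : Fin 1 => b i) = tp L (fun _ : Fin 1 => a i) :=
  tp_comp_eq_of_tp_eq (hb i i) fun _ => 0

theorem tp_pair_eq_of_mem_pairTypeRealizations (hb : b ∈ pairTypeRealizations L a) (i j : ι) :
    tp L (Sum.elim (fun _ : Fin 1 => b i) fun _ : Fin 1 => b j) =
      tp L (Sum.elim (fun _ : Fin 1 => a i) fun _ : Fin 1 => a j) := by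
  have h := tp_comp_eq_of_tp_eq (hb i j) (Sum.elim (fun _ : Fin 1 => 0) fun _ : Fin 1 => 1)
  rw [Sum.comp_elim, Sum.comp_elim] at h
  exact h

theorem finite_tp_image_pairTypeRealizations_of_fibers (f : β → ι)
    (hfin : (tp L '' pairTypeRealizations L (a ∘ f)).Finite)
    (hfib : ∀ b ∈ pairTypeRealizations L a,
      (tp L '' {c ∈ pairTypeRealizations L a | tp L (c ∘ f) = tp L (b ∘ f)}).Finite) :
    (tp L '' pairTypeRealizations L a).Finite := by
  refine finite_image_of_finite_fibers (f := fun b => tp L (b ∘ f)) (hfin.subset ?_) hfib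
  rintro _ ⟨b, hb, rfl⟩
  exact ⟨b ∘ f, comp_mem_pairTypeRealizations hb f, rfl⟩

theorem finite_tp_image_pairTypeRealizations_of_equiv (e : β ≃ ι)
    (hfin : (tp L '' pairTypeRealizations L (a ∘ e)).Finite) :
    (tp L '' pairTypeRealizations L a).Finite := by
  refine finite_tp_image_pairTypeRealizations_of_fibers e hfin fun b _ =>
    (Set.finite_singleton (tp L b)).subset ?_
  rintro _ ⟨c, ⟨-, hc⟩, rfl⟩
  exact (tp_comp_equiv_eq_iff e).1 hc

end PairTypes

end Types

section Algebraicity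

variable {L : FirstOrder.Language} {M : Type} [L.Structure M] {χ : L.Formula (Fin 1)}
  {α ι : Type*}

theorem InAcl.mono {A B : Set M} {c : M} (hc : InAcl L M A c) (hAB : A ⊆ B) : InAcl L M B c :=
  let ⟨k, φ, p, hp, h⟩ := hc
  ⟨k, φ, p, fun i => hAB (hp i), h⟩

theorem inAcl_range_iff [Finite α] {v : α → M} {c : M} : InAcl L M (Set.range v) c ↔
    ∃ φ : L.Formula (α ⊕ Fin 1), (solutionSet φ v).Finite ∧ c ∈ solutionSet φ v := by
  constructor
  · rintro ⟨k, φ, p, hp, h⟩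
    choose f hf using hp
    obtain rfl : v ∘ f = p := funext hf
    exact ⟨φ.relabel (Sum.map f id), by rwa [solutionSet_relabel]⟩
  · rintro ⟨φ, h⟩
    obtain ⟨k, ⟨e⟩⟩ := Finite.exists_equiv_fin α
    have hφ : solutionSet (φ.relabel (Sum.map e id)) (v ∘ e.symm) = solutionSet φ v := by
      rw [solutionSet_relabel, Function.comp_assoc, Equiv.symm_comp_self, Function.comp_id]
    rw [← hφ] at h
    exact ⟨k, _, v ∘ e.symm, fun i => ⟨e.symm i, rfl⟩, h⟩

theorem TrivialFormula.exists_inAcl_singleton (htriv : TrivialFormula L M χ) {v : α → M} {c : M}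
    (hv : ∀ i, χ.Realize fun _ => v i) (hc : χ.Realize fun _ => c)
    (hacl : InAcl L M (Set.range v) c) : ∃ i, InAcl L M {v i} c := by
  obtain ⟨_, ⟨i, rfl⟩, hi⟩ := htriv c hc (Set.range v) (Set.range_subset_iff.2 hv) hacl
  exact ⟨i, hi⟩

theorem StronglyMinimalFormula.finite_or_finite_not [Finite α]
    (hsm : StronglyMinimalFormula L M χ) (φ : L.Formula (α ⊕ Fin 1)) (v : α → M) :
    (solutionSet (χ.relabel Sum.inr ⊓ φ) v).Finite ∨
      (solutionSet (χ.relabel Sum.inr ⊓ ∼φ) v).Finite := by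
  obtain ⟨k, ⟨e⟩⟩ := Finite.exists_equiv_fin α
  simpa only [solutionSet, Formula.realize_inf, Formula.realize_not, Formula.realize_relabel,
    Sum.elim_comp_inr, Sum.elim_comp_map, Function.comp_assoc, Equiv.symm_comp_self,
    Function.comp_id] using hsm.2 k (φ.relabel (Sum.map e id)) (v ∘ e.symm)

theorem StronglyMinimalFormula.realize_iff_finite_of_not_inAcl [Finite α]
    (hsm : StronglyMinimalFormula L M χ) {v : α → M} {c : M} (hc : χ.Realize fun _ => c)
    (hacl : ¬InAcl L M (Set.range v) c) (φ : L.Formula (α ⊕ Fin 1)) :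
    φ.Realize (Sum.elim v fun _ => c) ↔ (solutionSet (χ.relabel Sum.inr ⊓ ∼φ) v).Finite := by
  have mem_inf (ψ : L.Formula (α ⊕ Fin 1)) (hψ : ψ.Realize (Sum.elim v fun _ => c)) :
      c ∈ solutionSet (χ.relabel Sum.inr ⊓ ψ) v := by
    rw [mem_solutionSet, Formula.realize_inf, Formula.realize_relabel, Sum.elim_comp_inr]
    exact ⟨hc, hψ⟩
  constructor
  · intro hφ
    exact (hsm.finite_or_finite_not φ v).resolve_left fun hfin =>
      hacl (inAcl_range_iff.2 ⟨_, hfin, mem_inf φ hφ⟩)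
  · intro hfin
    by_contra hφ
    exact hacl (inAcl_range_iff.2 ⟨_, hfin, mem_inf (∼φ) (Formula.realize_not.2 hφ)⟩)

variable [Nonempty M]

theorem StronglyMinimalFormula.tp_eq_of_not_inAcl [Finite α] (hsm : StronglyMinimalFormula L M χ)
    {v w : α → M} {c d : M} (h : tp L v = tp L w)
    (hc : χ.Realize fun _ => c) (hd : χ.Realize fun _ => d)
    (hcv : ¬InAcl L M (Set.range v) c) (hdw : ¬InAcl L M (Set.range w) d) :
    tp L (Sum.elim v fun _ : Fin 1 => c) = tp L (Sum.elim w fun _ => d) :=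
  tp_eq_iff.2 fun φ => by
    rw [hsm.realize_iff_finite_of_not_inAcl hc hcv, hsm.realize_iff_finite_of_not_inAcl hd hdw]
    exact ⟨finite_solutionSet_of_tp_eq h, finite_solutionSet_of_tp_eq h.symm⟩

theorem realize_of_mem_pairTypeRealizations {a b : ι → M} (ha : ∀ i, χ.Realize fun _ => a i)
    (hb : b ∈ pairTypeRealizations L a) (i : ι) : χ.Realize fun _ => b i :=
  (tp_eq_iff.1 (tp_single_eq_of_mem_pairTypeRealizations hb i) χ).2 (ha i)

theorem InAcl.exists_formula_forall_mem_pairTypeRealizations {a : ι → M} {i j : ι}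
    (hacl : InAcl L M {a i} (a j)) :
    ∃ θ : L.Formula (Fin 1 ⊕ Fin 1), ∀ b ∈ pairTypeRealizations L a,
      (solutionSet θ fun _ => b i).Finite ∧ b j ∈ solutionSet θ fun _ => b i := by
  rw [← Set.range_const (ι := Fin 1), inAcl_range_iff] at hacl
  obtain ⟨θ, hfin, hθ⟩ := hacl
  exact ⟨θ, fun b hb =>
    ⟨finite_solutionSet_of_tp_eq (tp_single_eq_of_mem_pairTypeRealizations hb i).symm hfin,
      (tp_eq_iff.1 (tp_pair_eq_of_mem_pairTypeRealizations hb i j) θ).2 hθ⟩⟩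

theorem InAcl.of_mem_pairTypeRealizations {a b : ι → M} {i j : ι} (hacl : InAcl L M {a i} (a j))
    (hb : b ∈ pairTypeRealizations L a) : InAcl L M {b i} (b j) := by
  obtain ⟨θ, hθ⟩ := InAcl.exists_formula_forall_mem_pairTypeRealizations hacl
  rw [← Set.range_const (ι := Fin 1), inAcl_range_iff]
  exact ⟨θ, hθ b hb⟩

theorem TrivialFormula.inAcl_range_of_mem_pairTypeRealizations (htriv : TrivialFormula L M χ)
    {a b : ι → M} (ha : ∀ i, χ.Realize fun _ => a i) (hb : b ∈ pairTypeRealizations L a)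
    {f : α → ι} {j : ι} (hacl : InAcl L M (Set.range (a ∘ f)) (a j)) :
    InAcl L M (Set.range (b ∘ f)) (b j) := by
  obtain ⟨i, hi⟩ := htriv.exists_inAcl_singleton (v := a ∘ f) (fun i => ha (f i)) (ha j) hacl
  have hbi : InAcl L M {b (f i)} (b j) := InAcl.of_mem_pairTypeRealizations hi hb
  exact hbi.mono (Set.singleton_subset_iff.2 ⟨i, rfl⟩)

theorem finite_tp_extensions_of_inAcl (htriv : TrivialFormula L M χ) {a : ι ⊕ Fin 1 → M}
    (ha : ∀ i, χ.Realize fun _ => a i)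
    (hacl : InAcl L M (Set.range (a ∘ Sum.inl)) (a (Sum.inr 0))) :
    (tp L '' {b ∈ pairTypeRealizations L a |
      tp L (b ∘ Sum.inl) = tp L (a ∘ Sum.inl)}).Finite := by
  obtain ⟨i, hi⟩ :=
    htriv.exists_inAcl_singleton (v := a ∘ Sum.inl) (fun i => ha (Sum.inl i)) (ha _) hacl
  obtain ⟨θ, hθ⟩ := InAcl.exists_formula_forall_mem_pairTypeRealizations (i := Sum.inl i) hi
  let φ : L.Formula (ι ⊕ Fin 1) := θ.relabel (Sum.map (fun _ => i) id)
  have hφ (b : ι ⊕ Fin 1 → M) (hb : b ∈ pairTypeRealizations L a) :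
      (solutionSet φ (b ∘ Sum.inl)).Finite ∧ b (Sum.inr 0) ∈ solutionSet φ (b ∘ Sum.inl) := by
    rw [solutionSet_relabel]
    exact hθ b hb
  refine (finite_tp_image_of_finite_solutionSet (hφ a fun _ _ => rfl).1).subset
    (Set.image_mono fun b hb => ⟨hb.2, ?_⟩)
  simpa only [mem_solutionSet, sumElim_comp_inl_const] using (hφ b hb.1).2

theorem finite_tp_extensions_of_not_inAcl [Finite ι] (hsm : StronglyMinimalFormula L M χ)
    (htriv : TrivialFormula L M χ) {a : ι ⊕ Fin 1 → M} (ha : ∀ i, χ.Realize fun _ => a i)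
    (hacl : ¬InAcl L M (Set.range (a ∘ Sum.inl)) (a (Sum.inr 0))) :
    (tp L '' {b ∈ pairTypeRealizations L a |
      tp L (b ∘ Sum.inl) = tp L (a ∘ Sum.inl)}).Finite := by
  refine (Set.finite_singleton (tp L a)).subset ?_
  rintro _ ⟨b, ⟨hb, htp⟩, rfl⟩
  have hbX := realize_of_mem_pairTypeRealizations ha hb
  have hab : a ∈ pairTypeRealizations L b := fun i j => (hb i j).symm
  have h := hsm.tp_eq_of_not_inAcl htp (hbX (Sum.inr 0)) (ha (Sum.inr 0))
    (fun hbacl => hacl (htriv.inAcl_range_of_mem_pairTypeRealizations hbX hab hbacl)) hacl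
  rwa [sumElim_comp_inl_const, sumElim_comp_inl_const] at h

theorem finite_tp_extensions [Finite ι] (hsm : StronglyMinimalFormula L M χ)
    (htriv : TrivialFormula L M χ) {a : ι ⊕ Fin 1 → M} (ha : ∀ i, χ.Realize fun _ => a i) :
    (tp L '' {b ∈ pairTypeRealizations L a |
      tp L (b ∘ Sum.inl) = tp L (a ∘ Sum.inl)}).Finite := by
  by_cases hacl : InAcl L M (Set.range (a ∘ Sum.inl)) (a (Sum.inr 0))
  · exact finite_tp_extensions_of_inAcl htriv ha hacl
  · exact finite_tp_extensions_of_not_inAcl hsm htriv ha hacl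

theorem finite_tp_image_pairTypeRealizations_sum [Finite ι] (hsm : StronglyMinimalFormula L M χ)
    (htriv : TrivialFormula L M χ) {a : ι ⊕ Fin 1 → M} (ha : ∀ i, χ.Realize fun _ => a i)
    (hfin : (tp L '' pairTypeRealizations L (a ∘ Sum.inl)).Finite) :
    (tp L '' pairTypeRealizations L a).Finite := by
  refine finite_tp_image_pairTypeRealizations_of_fibers Sum.inl hfin fun b hb => ?_
  rw [← pairTypeRealizations_eq_of_mem hb]
  exact finite_tp_extensions hsm htriv (realize_of_mem_pairTypeRealizations ha hb)

theorem finite_tp_image_pairTypeRealizations [Finite ι] (hsm : StronglyMinimalFormula L M χ)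
    (htriv : TrivialFormula L M χ) {a : ι → M} (ha : ∀ i, χ.Realize fun _ => a i) :
    (tp L '' pairTypeRealizations L a).Finite := by
  induction ι using Finite.induction_empty_option with
  | of_equiv e ih => exact finite_tp_image_pairTypeRealizations_of_equiv e (ih fun i => ha (e i))
  | h_empty => exact (Set.toFinite _).image _
  | @h_option κ _ ih =>
    let e : κ ⊕ Fin 1 ≃ Option κ :=
      ((Equiv.optionEquivSumPUnit κ).trans ((Equiv.refl κ).sumCongr finOneEquiv.symm)).symm
    exact finite_tp_image_pairTypeRealizations_of_equiv e
      (finite_tp_image_pairTypeRealizations_sum hsm htriv (fun i => ha (e i))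
        (ih fun i => ha (e (Sum.inl i))))

end Algebraicity

theorem trivial_strongly_minimal_types_binary_general {L : FirstOrder.Language} {M : Type}
    [L.Structure M] {χ : L.Formula (Fin 1)} (hsm : StronglyMinimalFormula L M χ)
    (htriv : TrivialFormula L M χ) {ι : Type*} [Finite ι] {a : ι → M}
    (ha : ∀ i, χ.Realize fun _ => a i) :
    ∃ (N : ℕ) (q : Fin N → ι → M), (∀ ℓ i, χ.Realize fun _ => q ℓ i) ∧
      ∀ b : ι → M,
        (∀ (i j : ι) (φ : L.Formula (Fin 2)), φ.Realize ![a i, a j] → φ.Realize ![b i, b j]) →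
        ∃ ℓ, ∀ φ : L.Formula ι, φ.Realize (q ℓ) ↔ φ.Realize b := by
  have : Nonempty M := hsm.1.nonempty.to_type
  have hfin := finite_tp_image_pairTypeRealizations hsm htriv ha
  obtain ⟨N, p, hp⟩ := hfin.fin_param
  have hp_mem (ℓ : Fin N) : p ℓ ∈ tp L '' pairTypeRealizations L a := hp.2 ▸ ⟨ℓ, rfl⟩
  choose q hq hqp using hp_mem
  refine ⟨N, q, fun ℓ => realize_of_mem_pairTypeRealizations ha (hq ℓ), fun b hb => ?_⟩
  obtain ⟨ℓ, hℓ⟩ : tp L b ∈ Set.range p :=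
    hp.2 ▸ ⟨b, mem_pairTypeRealizations_iff_imp.2 hb, rfl⟩
  exact ⟨ℓ, tp_eq_iff.1 ((hqp ℓ).trans hℓ)⟩

theorem trivial_strongly_minimal_types_binary
    (L : FirstOrder.Language) (M : Type) [L.Structure M] [Nonempty M]
    -- M is a saturated model of a complete stable theory
    (hsat : SaturatedModel L M) (hstable : StableModel L M)
    -- X is a trivial strongly minimal set, defined by the formula χ
    (χ : L.Formula (Fin 1))
    (hsm : StronglyMinimalFormula L M χ) (htriv : TrivialFormula L M χ)
    -- a = (a_1, …, a_n) ∈ X^n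
    (n : ℕ) (a : Fin n → M) (ha : ∀ i, χ.Realize (fun _ => a i)) :
    -- the partial type Σ = ⋃_{i,j} tp(a_i, a_j) has only finitely many completions
    -- q_1, …, q_N (each represented by a realizing tuple, as M is saturated):
    ∃ (N : ℕ) (q : Fin N → Fin n → M),
      (∀ ℓ, ∀ i, χ.Realize (fun _ => q ℓ i)) ∧
      ∀ b : Fin n → M, (∀ i, χ.Realize (fun _ => b i)) →
        -- if b realizes Σ, i.e. every formula true of (a_i, a_j) is true of (b_i, b_j),
        (∀ (i j : Fin n) (φ : L.Formula (Fin 2)),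
          φ.Realize ![a i, a j] → φ.Realize ![b i, b j]) →
        -- then b realizes q_ℓ for some ℓ, i.e. tp(b) = tp(q_ℓ)
        ∃ ℓ : Fin N, ∀ φ : L.Formula (Fin n), φ.Realize (q ℓ) ↔ φ.Realize b := by
  obtain ⟨N, q, hq, h⟩ := trivial_strongly_minimal_types_binary_general hsm htriv ha
  exact ⟨N, q, hq, fun b _ => h b⟩
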